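/- Define a product on the graded ℚ-vector space ⊕_{n≥0} S_n^± by f * g := Y(f,1)g = (1/(a!·b!)) Σ_{σ ∈ S_{a+b}} σ·( f(s₁,…,s_a)·g(s_{a+1},…,s_{a+b}) ) for f ∈ S_a^±, g ∈ S_b^±. Then this product is ℚ-bilinear, associative, commutative, graded (f * g ∈ S_{a+b}^±), and has the element 1 ∈ S_0^± = ℚ as a two-sided unit; hence ⊕_{n≥0} S_n^± is a commutative graded ℚ-algebra. -/

import Mathlib

open scoped BigOperators

noncomputable section

/-- `L n` is the ring of Laurent polynomials over `ℚ` in the `n` variables `s₁, …, s_n`,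
realized as the monoid algebra of the exponent group `Fin n → ℤ`. -/
abbrev L (n : ℕ) : Type := AddMonoidAlgebra ℚ (Fin n → ℤ)

/-- `LL n A` is the ring of Laurent polynomials over `ℚ` in the variables `s₁, …, s_n`
together with extra formal variables whose exponents lie in the abelian group `A`
(e.g. `A = ℤ` for one variable `z`, `A = ℤ × ℤ` for two variables `z, w`). -/
abbrev LL (n : ℕ) (A : Type) [AddCommGroup A] : Type :=
  AddMonoidAlgebra ℚ ((Fin n → ℤ) × A)

/-- The ring homomorphism between monoid algebras induced by a map of exponent groups. -/
def mdr {G H : Type} [AddCommMonoid G] [AddCommMonoid H] (f : G →+ H) :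
    AddMonoidAlgebra ℚ G →+* AddMonoidAlgebra ℚ H :=
  AddMonoidAlgebra.mapDomainRingHom ℚ f

/-- The action of a permutation `σ` of the variables on exponents: `s_i ↦ s_{σ(i)}`. -/
def permHomL {n : ℕ} (σ : Equiv.Perm (Fin n)) : (Fin n → ℤ) →+ (Fin n → ℤ) :=
  AddMonoidHom.mk' (fun μ => μ ∘ σ.symm) (fun _ _ => rfl)

/-- The action of a permutation of the variables `s₁, …, s_n` on `L n`. -/
def permL {n : ℕ} (σ : Equiv.Perm (Fin n)) : L n →+* L n := mdr (permHomL σ)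

/-- A Laurent polynomial in `s₁, …, s_n` is symmetric if it is fixed by all permutations
of the variables; `SymmLaurent f` says `f ∈ S_n^±`. -/
def SymmLaurent {n : ℕ} (f : L n) : Prop := ∀ σ : Equiv.Perm (Fin n), permL σ f = f

/-- Permutations act on `LL n A` through the `s`-exponents only. -/
def permHomLL {n : ℕ} {A : Type} [AddCommGroup A] (σ : Equiv.Perm (Fin n)) :
    ((Fin n → ℤ) × A) →+ ((Fin n → ℤ) × A) :=
  AddMonoidHom.mk' (fun p => (p.1 ∘ σ.symm, p.2)) (fun _ _ => rfl)

/-- The action of a permutation of the variables on `LL n A`. -/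
def permLL {n : ℕ} {A : Type} [AddCommGroup A] (σ : Equiv.Perm (Fin n)) :
    LL n A →+* LL n A := mdr (permHomLL σ)

/-- Extension by zero of an exponent vector on the first `a` of `a + b` variables. -/
def extA (a b : ℕ) (μ : Fin a → ℤ) : Fin (a + b) → ℤ :=
  fun i => if h : (i : ℕ) < a then μ ⟨i, h⟩ else 0

/-- Extension by zero of an exponent vector on the last `b` of `a + b` variables. -/
def extB (a b : ℕ) (ν : Fin b → ℤ) : Fin (a + b) → ℤ :=
  fun i => if _ : (i : ℕ) < a then 0 else ν ⟨(i : ℕ) - a, by have := i.isLt; omega⟩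

lemma extA_add (a b : ℕ) (μ ν : Fin a → ℤ) :
    extA a b (μ + ν) = extA a b μ + extA a b ν := by
  funext i
  simp only [extA, Pi.add_apply]
  split <;> simp

lemma extB_add (a b : ℕ) (μ ν : Fin b → ℤ) :
    extB a b (μ + ν) = extB a b μ + extB a b ν := by
  funext i
  simp only [extB, Pi.add_apply]
  split <;> simp

/-- On exponents, the substitution `f(s₁,…,s_a) ↦ f(z s₁, …, z s_a)` followed by the
inclusion into the first `a` of `a + b` variables: a monomial `s^μ z^α` is sent to
`s^(extA μ) z^(α + (Σᵢ μᵢ)·zv)`, where `zv : A` is the exponent vector of `z`. -/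
def zinjHom {A : Type} [AddCommGroup A] (zv : A) (a b : ℕ) :
    ((Fin a → ℤ) × A) →+ ((Fin (a + b) → ℤ) × A) :=
  AddMonoidHom.mk' (fun p => (extA a b p.1, p.2 + (∑ i, p.1 i) • zv))
    (by
      intro p q
      refine Prod.ext (extA_add a b p.1 q.1) ?_
      simp only [Prod.snd_add]
      show p.2 + q.2 + (∑ i, (p.1 i + q.1 i)) • zv = _
      rw [Finset.sum_add_distrib, add_smul]
      abel)

/-- On exponents, the inclusion of the last `b` of `a + b` variables. -/
def winjHom {A : Type} [AddCommGroup A] (a b : ℕ) :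
    ((Fin b → ℤ) × A) →+ ((Fin (a + b) → ℤ) × A) :=
  AddMonoidHom.mk' (fun p => (extB a b p.1, p.2))
    (fun p q => Prod.ext (extB_add a b p.1 q.1) rfl)

/-- The inclusion `L n → LL n A` (no formal-variable exponents). -/
def inclz (A : Type) [AddCommGroup A] {n : ℕ} : L n →+* LL n A :=
  mdr (AddMonoidHom.inl (Fin n → ℤ) A)

/-- The vertex operation
`Y(f,z)g = (1/(a!·b!)) Σ_{σ ∈ S_{a+b}} σ·(f(z s₁,…,z s_a)·g(s_{a+1},…,s_{a+b}))`,
where the formal variable `z` has exponent vector `zv : A` and `Y` acts coefficientwise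
on Laurent-polynomial coefficients in additional formal variables. -/
def Yop {A : Type} [AddCommGroup A] (zv : A) {a b : ℕ}
    (f : LL a A) (g : LL b A) : LL (a + b) A :=
  ((a.factorial * b.factorial : ℚ))⁻¹ •
    ∑ σ : Equiv.Perm (Fin (a + b)),
      permLL σ (mdr (zinjHom zv a b) f * mdr (winjHom a b) g)

/-- Relabelling of the variables along an equality `m = n` of their number. -/
def reindexEquiv (A : Type) [AddCommGroup A] {m n : ℕ} (h : m = n) :
    ((Fin m → ℤ) × A) ≃+ ((Fin n → ℤ) × A) where
  toFun p := (p.1 ∘ (finCongr h).symm, p.2)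
  invFun p := (p.1 ∘ (finCongr h), p.2)
  left_inv p := by
    refine Prod.ext ?_ rfl
    funext i
    simp [Function.comp]
  right_inv p := by
    refine Prod.ext ?_ rfl
    funext i
    simp [Function.comp]
  map_add' _ _ := rfl

/-- The canonical identification `LL m A ≃ LL n A` for `m = n`. -/
def reindex (A : Type) [AddCommGroup A] {m n : ℕ} (h : m = n) :
    LL m A →+* LL n A := mdr (reindexEquiv A h).toAddMonoidHom

/-- The operator `z^{deg}`, multiplying each monomial `s₁^{μ₁}⋯s_n^{μ_n}` by
`z^{μ₁+⋯+μ_n}` (with `A = ℤ` recording the exponent of the single variable `z`). -/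
def zdegOp {n : ℕ} : LL n ℤ →+* LL n ℤ :=
  mdr (AddMonoidHom.mk' (fun p => (p.1, p.2 + ∑ i, p.1 i))
    (by
      intro p q
      refine Prod.ext rfl ?_
      simp only [Prod.snd_add]
      show p.2 + q.2 + ∑ i, (p.1 i + q.1 i) = p.2 + ∑ i, p.1 i + (q.2 + ∑ i, q.1 i)
      rw [Finset.sum_add_distrib]
      ring))

end

noncomputable section

/-- The product `f * g := Y(f,1)g
  = (1/(a!·b!)) Σ_{σ ∈ S_{a+b}} σ·(f(s₁,…,s_a)·g(s_{a+1},…,s_{a+b}))`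
on the graded space `⊕_{n≥0} S_n^±` (the specialization of the vertex operation at
`z = 1`). -/
def mulOp {a b : ℕ} (f : L a) (g : L b) : L (a + b) :=
  ((a.factorial * b.factorial : ℚ))⁻¹ •
    ∑ σ : Equiv.Perm (Fin (a + b)),
      permL σ (mdr (AddMonoidHom.mk' (extA a b) (extA_add a b)) f *
               mdr (AddMonoidHom.mk' (extB a b) (extB_add a b)) g)

/-- Relabelling of the variables of `L m` along an equality `m = n`. -/
def reindexL {m n : ℕ} (h : m = n) : L m →+* L n :=
  mdr (AddMonoidHom.mk' (fun μ => μ ∘ (finCongr h).symm) (fun _ _ => rfl))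

end

/-!
A symmetric Laurent polynomial does not see which bijection relabels its variables, so it is
harmless to index variables by arbitrary finite types. There the product is the symmetrization of
`f(s) g(t)`, a Laurent polynomial in the variables `σ ⊕ τ`, and commutativity and associativity are
induced by the bijections `τ ⊕ σ ≃ σ ⊕ τ` and `(σ ⊕ τ) ⊕ υ ≃ σ ⊕ (τ ⊕ υ)`. The factorials are right
because symmetrizing a factor before symmetrizing the product only repeats each term `|σ|!` times.
-/

/-- Laurent polynomials over `R` in the variables `s_i`, `i : σ`, realized as the monoid algebra of
the exponent group `σ → ℤ`. For infinite `σ` a monomial may involve infinitely many variables. -/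
abbrev MvLaurent (R σ : Type*) [Semiring R] : Type _ := AddMonoidAlgebra R (σ → ℤ)

namespace MvLaurent

open Function Equiv Fintype
open scoped Nat

section CommSemiring

variable {R σ τ υ ι κ : Type*} [CommSemiring R]

/-- The substitution of variables `s_i ↦ s_{e i}`. On exponents this is extension by zero; `e` is
required to be injective because exponents of identified variables would have to be added. -/
noncomputable def rename (e : σ ↪ τ) : MvLaurent R σ →ₐ[R] MvLaurent R τ :=
  AddMonoidAlgebra.mapDomainAlgHom R R (ExtendByZero.hom ℤ e)

theorem rename_rename (e : τ ↪ υ) (d : σ ↪ τ) (f : MvLaurent R σ) :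
    rename e (rename d f) = rename (d.trans e) f := by
  have hom_comp : (ExtendByZero.hom ℤ e).comp (ExtendByZero.hom ℤ d) =
      ExtendByZero.hom ℤ (d.trans e) :=
    AddMonoidHom.ext fun μ => (d.injective.extend_comp e.injective μ 0).symm
  rw [rename, rename, rename, ← hom_comp, AddMonoidAlgebra.mapDomainAlgHom_comp,
    AlgHom.comp_apply]

@[simp]
theorem rename_refl (f : MvLaurent R σ) : rename (Embedding.refl σ) f = f := by
  have hom_id : ExtendByZero.hom ℤ (Embedding.refl σ) = AddMonoidHom.id (σ → ℤ) :=
    AddMonoidHom.ext fun μ => extend_id μ 0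
  rw [rename, hom_id, AddMonoidAlgebra.mapDomainAlgHom_id, AlgHom.id_apply]

/-- `IsSymmetric f` says that `f` is fixed by all permutations of its variables. -/
def IsSymmetric (f : MvLaurent R σ) : Prop := ∀ π : Perm σ, rename π.toEmbedding f = f

theorem IsSymmetric.rename_eq_rename {f : MvLaurent R σ} (hf : IsSymmetric f) (e d : σ ≃ τ) :
    rename e.toEmbedding f = rename d.toEmbedding f := by
  have factor : e.toEmbedding = (e.trans d.symm).toEmbedding.trans d.toEmbedding := by
    ext i
    simp
  rw [factor, ← rename_rename, hf]

theorem IsSymmetric.rename {f : MvLaurent R σ} (hf : IsSymmetric f) (e : σ ≃ τ) :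
    IsSymmetric (rename e.toEmbedding f) := fun π => by
  rw [rename_rename]
  exact hf.rename_eq_rename (e.trans π) e

/-- The product `f(s) g(t)` of two Laurent polynomials in disjoint sets of variables. -/
noncomputable def concat : MvLaurent R σ →ₗ[R] MvLaurent R τ →ₗ[R] MvLaurent R (σ ⊕ τ) :=
  (LinearMap.mul R _).compl₁₂ (rename Embedding.inl).toLinearMap (rename Embedding.inr).toLinearMap

theorem concat_apply (f : MvLaurent R σ) (g : MvLaurent R τ) :
    concat f g = rename Embedding.inl f * rename Embedding.inr g := rfl

theorem concat_rename (e : σ ↪ ι) (d : τ ↪ κ) (f : MvLaurent R σ) (g : MvLaurent R τ) :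
    concat (rename e f) (rename d g) = rename (e.sumMap d) (concat f g) := by
  simp only [concat_apply, map_mul, rename_rename]
  rfl

theorem rename_sumComm_concat (f : MvLaurent R σ) (g : MvLaurent R τ) :
    rename (sumComm σ τ).toEmbedding (concat f g) = concat g f := by
  simp only [concat_apply, map_mul, rename_rename]
  exact mul_comm _ _

theorem rename_sumAssoc_concat (f : MvLaurent R σ) (g : MvLaurent R τ) (h : MvLaurent R υ) :
    rename (sumAssoc σ τ υ).toEmbedding (concat (concat f g) h) = concat f (concat g h) := by
  simp only [concat_apply, map_mul, rename_rename]
  exact mul_assoc _ _ _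

theorem rename_sumEmpty_concat_one [IsEmpty τ] (f : MvLaurent R σ) :
    rename (sumEmpty σ τ).toEmbedding (concat f 1) = f := by
  rw [concat_apply, map_one, mul_one, rename_rename]
  exact rename_refl f

section Symmetrize

variable [Fintype σ] [DecidableEq σ] [Fintype τ] [DecidableEq τ]

/-- The sum of all permutations of the variables of a Laurent polynomial, without the normalizing
factor `1 / |σ|!`. -/
noncomputable def symmetrize : MvLaurent R σ →ₗ[R] MvLaurent R σ :=
  ∑ π : Perm σ, (rename π.toEmbedding).toLinearMap

theorem symmetrize_apply (f : MvLaurent R σ) :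
    symmetrize f = ∑ π : Perm σ, rename π.toEmbedding f := by
  simp only [symmetrize, LinearMap.sum_apply, AlgHom.toLinearMap_apply]

theorem rename_symmetrize (e : σ ≃ τ) (f : MvLaurent R σ) :
    rename e.toEmbedding (symmetrize f) = symmetrize (rename e.toEmbedding f) := by
  simp only [symmetrize_apply, map_sum, rename_rename]
  refine Fintype.sum_equiv e.permCongr _ _ fun π => congrArg (rename · f) ?_
  ext i
  simp

theorem symmetrize_rename (π : Perm σ) (f : MvLaurent R σ) :
    symmetrize (rename π.toEmbedding f) = symmetrize f := by
  simp only [symmetrize_apply, rename_rename]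
  exact Fintype.sum_equiv (Equiv.mulRight π) _ _ fun _ => rfl

theorem isSymmetric_symmetrize (f : MvLaurent R σ) : IsSymmetric (symmetrize f) := fun π => by
  rw [rename_symmetrize, symmetrize_rename]

theorem IsSymmetric.symmetrize_eq {f : MvLaurent R σ} (hf : IsSymmetric f) :
    symmetrize f = (card σ)! • f := by
  rw [symmetrize_apply, Finset.sum_congr rfl fun π _ => hf π, Finset.sum_const, Finset.card_univ,
    card_perm]

theorem symmetrize_concat_symmetrize_left (f : MvLaurent R σ) (g : MvLaurent R τ) :
    symmetrize (concat (symmetrize f) g) = (card σ)! • symmetrize (concat f g) := by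
  have term (π : Perm σ) :
      symmetrize (concat (rename π.toEmbedding f) g) = symmetrize (concat f g) := by
    conv_lhs => rw [← rename_refl g, concat_rename]
    exact symmetrize_rename (π.sumCongr (Equiv.refl τ)) _
  simp only [symmetrize_apply f, map_sum, LinearMap.sum_apply, term, Finset.sum_const,
    Finset.card_univ, card_perm]

theorem symmetrize_concat_symmetrize_right (f : MvLaurent R σ) (g : MvLaurent R τ) :
    symmetrize (concat f (symmetrize g)) = (card τ)! • symmetrize (concat f g) := by
  rw [← rename_sumComm_concat, ← rename_symmetrize, symmetrize_concat_symmetrize_left, map_nsmul,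
    rename_symmetrize, rename_sumComm_concat]

end Symmetrize

end CommSemiring

section Field

variable {K σ τ υ ι κ : Type*} [Field K]
  [Fintype σ] [DecidableEq σ] [Fintype τ] [DecidableEq τ] [Fintype υ] [DecidableEq υ]
  [Fintype ι] [DecidableEq ι] [Fintype κ] [DecidableEq κ]

/-- The product `f * g` for variables indexed by arbitrary finite types: the symmetrization of
`f(s) g(t)`, divided by `|σ|! |τ|!`. -/
noncomputable def symmMul : MvLaurent K σ →ₗ[K] MvLaurent K τ →ₗ[K] MvLaurent K (σ ⊕ τ) :=
  ((card σ)! * (card τ)! : K)⁻¹ • concat.compr₂ symmetrize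

theorem symmMul_apply (f : MvLaurent K σ) (g : MvLaurent K τ) :
    symmMul f g = ((card σ)! * (card τ)! : K)⁻¹ • symmetrize (concat f g) := rfl

theorem isSymmetric_symmMul (f : MvLaurent K σ) (g : MvLaurent K τ) :
    IsSymmetric (symmMul f g) := fun π => by
  rw [symmMul_apply, map_smul, isSymmetric_symmetrize]

theorem symmMul_rename (e : σ ≃ ι) (d : τ ≃ κ) (f : MvLaurent K σ) (g : MvLaurent K τ) :
    symmMul (rename e.toEmbedding f) (rename d.toEmbedding g) =
      rename (e.sumCongr d).toEmbedding (symmMul f g) := by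
  rw [symmMul_apply, symmMul_apply, concat_rename, map_smul, rename_symmetrize, card_congr e,
    card_congr d]
  rfl

theorem rename_sumComm_symmMul (f : MvLaurent K σ) (g : MvLaurent K τ) :
    rename (sumComm σ τ).toEmbedding (symmMul f g) = symmMul g f := by
  rw [symmMul_apply, symmMul_apply, map_smul, rename_symmetrize, rename_sumComm_concat, mul_comm]

variable [CharZero K]

theorem symmMul_symmMul_left (f : MvLaurent K σ) (g : MvLaurent K τ) (h : MvLaurent K υ) :
    symmMul (symmMul f g) h = ((card σ)! * (card τ)! * (card υ)! : K)⁻¹ •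
      symmetrize (concat (concat f g) h) := by
  have factorial_ne_zero : ((card (σ ⊕ τ))! : K) ≠ 0 := Nat.cast_ne_zero.2 (Nat.factorial_ne_zero _)
  simp only [symmMul_apply, map_smul, LinearMap.smul_apply, symmetrize_concat_symmetrize_left,
    ← Nat.cast_smul_eq_nsmul K, smul_smul]
  congr 1
  field_simp

theorem symmMul_symmMul_right (f : MvLaurent K σ) (g : MvLaurent K τ) (h : MvLaurent K υ) :
    symmMul f (symmMul g h) = ((card σ)! * (card τ)! * (card υ)! : K)⁻¹ •
      symmetrize (concat f (concat g h)) := by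
  have factorial_ne_zero : ((card (τ ⊕ υ))! : K) ≠ 0 := Nat.cast_ne_zero.2 (Nat.factorial_ne_zero _)
  simp only [symmMul_apply, map_smul, symmetrize_concat_symmetrize_right,
    ← Nat.cast_smul_eq_nsmul K, smul_smul]
  congr 1
  field_simp

theorem rename_sumAssoc_symmMul (f : MvLaurent K σ) (g : MvLaurent K τ) (h : MvLaurent K υ) :
    rename (sumAssoc σ τ υ).toEmbedding (symmMul (symmMul f g) h) = symmMul f (symmMul g h) := by
  rw [symmMul_symmMul_left, symmMul_symmMul_right, map_smul, rename_symmetrize,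
    rename_sumAssoc_concat]

theorem rename_sumEmpty_symmMul_one [IsEmpty τ] {f : MvLaurent K σ} (hf : IsSymmetric f) :
    rename (sumEmpty σ τ).toEmbedding (symmMul f (1 : MvLaurent K τ)) = f := by
  have factorial_ne_zero : ((card σ)! : K) ≠ 0 := Nat.cast_ne_zero.2 (Nat.factorial_ne_zero _)
  rw [symmMul_apply, map_smul, rename_symmetrize, rename_sumEmpty_concat_one, hf.symmetrize_eq,
    ← Nat.cast_smul_eq_nsmul K, smul_smul, card_eq_zero (α := τ), Nat.factorial_zero, Nat.cast_one,
    mul_one, inv_mul_cancel₀ factorial_ne_zero, one_smul]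

end Field

end MvLaurent

open MvLaurent

section FinVariables

variable {a b c m n : ℕ}

theorem mdr_eq_rename {σ τ : Type} {e : σ ↪ τ} {φ : (σ → ℤ) →+ (τ → ℤ)}
    (hφ : ∀ μ, φ μ = Function.extend e μ 0) (f : MvLaurent ℚ σ) : mdr φ f = rename e f := by
  rw [show φ = Function.ExtendByZero.hom ℤ e from AddMonoidHom.ext hφ]
  rfl

theorem comp_symm_eq_extend {σ τ M : Type*} [Zero M] (e : σ ≃ τ) (μ : σ → M) :
    μ ∘ e.symm = Function.extend e μ 0 := by
  rw [Equiv.comp_symm_eq, Function.extend_comp e.injective]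

theorem castAdd_ne_natAdd (i : Fin a) (j : Fin b) : Fin.castAdd b i ≠ Fin.natAdd a j := by
  simp only [ne_eq, Fin.ext_iff, Fin.val_castAdd, Fin.val_natAdd]
  omega

theorem extA_eq_extend (μ : Fin a → ℤ) : extA a b μ = Function.extend (Fin.castAdd b) μ 0 := by
  funext i
  induction i using Fin.addCases with
  | left i => simp [extA, (Fin.castAdd_injective a b).extend_apply]
  | right i =>
    rw [Function.extend_apply' _ _ _ fun ⟨j, hj⟩ => castAdd_ne_natAdd j i hj]
    simp [extA]

theorem extB_eq_extend (ν : Fin b → ℤ) : extB a b ν = Function.extend (Fin.natAdd a) ν 0 := by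
  funext i
  induction i using Fin.addCases with
  | left i =>
    rw [Function.extend_apply' _ _ _ fun ⟨j, hj⟩ => castAdd_ne_natAdd i j hj.symm]
    simp [extB]
  | right i => simp [extB, (Fin.natAdd_injective b a).extend_apply]

theorem permL_eq_rename (π : Equiv.Perm (Fin n)) (f : L n) :
    permL π f = rename π.toEmbedding f :=
  mdr_eq_rename (comp_symm_eq_extend π) f

theorem reindexL_eq_rename (h : m = n) (f : L m) :
    reindexL h f = rename (finCongr h).toEmbedding f :=
  mdr_eq_rename (comp_symm_eq_extend (finCongr h)) f

theorem symmLaurent_iff_isSymmetric {f : L n} : SymmLaurent f ↔ IsSymmetric f := by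
  simp only [SymmLaurent, IsSymmetric, permL_eq_rename]

theorem mulOp_eq_rename_symmMul (f : L a) (g : L b) :
    mulOp f g = rename finSumFinEquiv.toEmbedding (symmMul f g) := by
  have left : mdr (AddMonoidHom.mk' (extA a b) (extA_add a b)) f =
      rename (Fin.castAddEmb b) f := mdr_eq_rename extA_eq_extend f
  have right : mdr (AddMonoidHom.mk' (extB a b) (extB_add a b)) g =
      rename (Fin.natAddEmb a) g := mdr_eq_rename extB_eq_extend g
  have product : rename finSumFinEquiv.toEmbedding (concat f g) =
      rename (Fin.castAddEmb b) f * rename (Fin.natAddEmb a) g := by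
    simp only [concat_apply, map_mul, rename_rename]
    rfl
  rw [symmMul_apply, map_smul, rename_symmetrize, product, symmetrize_apply, Fintype.card_fin,
    Fintype.card_fin]
  simp only [mulOp, left, right, permL_eq_rename]

theorem mulOp_add_left (f f' : L a) (g : L b) :
    mulOp (f + f') g = mulOp f g + mulOp f' g := by
  simp only [mulOp_eq_rename_symmMul, map_add, LinearMap.add_apply]

theorem mulOp_add_right (f : L a) (g g' : L b) :
    mulOp f (g + g') = mulOp f g + mulOp f g' := by
  simp only [mulOp_eq_rename_symmMul, map_add]

theorem mulOp_smul_left (q : ℚ) (f : L a) (g : L b) : mulOp (q • f) g = q • mulOp f g := by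
  simp only [mulOp_eq_rename_symmMul, map_smul, LinearMap.smul_apply]

theorem mulOp_smul_right (q : ℚ) (f : L a) (g : L b) : mulOp f (q • g) = q • mulOp f g := by
  simp only [mulOp_eq_rename_symmMul, map_smul]

theorem symmLaurent_mulOp (f : L a) (g : L b) : SymmLaurent (mulOp f g) := by
  rw [symmLaurent_iff_isSymmetric, mulOp_eq_rename_symmMul]
  exact (isSymmetric_symmMul f g).rename finSumFinEquiv

theorem mulOp_assoc (f : L a) (g : L b) (h : L c) :
    reindexL (Nat.add_assoc a b c) (mulOp (mulOp f g) h) = mulOp f (mulOp g h) := by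
  have left : mulOp (mulOp f g) h = rename finSumFinEquiv.toEmbedding
      (rename (finSumFinEquiv.sumCongr (Equiv.refl _)).toEmbedding (symmMul (symmMul f g) h)) := by
    rw [← symmMul_rename, Equiv.refl_toEmbedding, rename_refl, ← mulOp_eq_rename_symmMul,
      ← mulOp_eq_rename_symmMul]
  have right : mulOp f (mulOp g h) = rename finSumFinEquiv.toEmbedding
      (rename ((Equiv.refl _).sumCongr finSumFinEquiv).toEmbedding (symmMul f (symmMul g h))) := by
    rw [← symmMul_rename, Equiv.refl_toEmbedding, rename_refl, ← mulOp_eq_rename_symmMul,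
      ← mulOp_eq_rename_symmMul]
  rw [left, right, ← rename_sumAssoc_symmMul, reindexL_eq_rename]
  simp only [rename_rename]
  exact (isSymmetric_symmMul _ h).rename_eq_rename
    (((finSumFinEquiv.sumCongr (Equiv.refl _)).trans finSumFinEquiv).trans
      (finCongr (Nat.add_assoc a b c)))
    (((Equiv.sumAssoc _ _ _).trans ((Equiv.refl _).sumCongr finSumFinEquiv)).trans finSumFinEquiv)

theorem mulOp_comm (f : L a) (g : L b) :
    mulOp f g = reindexL (Nat.add_comm b a) (mulOp g f) := by
  rw [reindexL_eq_rename, mulOp_eq_rename_symmMul, mulOp_eq_rename_symmMul,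
    ← rename_sumComm_symmMul, rename_rename, rename_rename]
  exact (isSymmetric_symmMul g f).rename_eq_rename
    ((Equiv.sumComm _ _).trans finSumFinEquiv) (finSumFinEquiv.trans (finCongr (Nat.add_comm b a)))

theorem mulOp_one {f : L n} (hf : SymmLaurent f) : mulOp f (1 : L 0) = f := by
  rw [symmLaurent_iff_isSymmetric] at hf
  rw [mulOp_eq_rename_symmMul, (isSymmetric_symmMul f 1).rename_eq_rename finSumFinEquiv
    (Equiv.sumEmpty _ _)]
  exact rename_sumEmpty_symmMul_one hf

theorem one_mulOp {f : L n} (hf : SymmLaurent f) :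
    reindexL (Nat.zero_add n) (mulOp (1 : L 0) f) = f :=
  (mulOp_comm f 1).symm.trans (mulOp_one hf)

end FinVariables

theorem stmt_18_general :
    (∀ (a b : ℕ) (f f' : L a) (g : L b), mulOp (f + f') g = mulOp f g + mulOp f' g)
    ∧ (∀ (a b : ℕ) (f : L a) (g g' : L b), mulOp f (g + g') = mulOp f g + mulOp f g')
    ∧ (∀ (a b : ℕ) (q : ℚ) (f : L a) (g : L b),
        mulOp (q • f) g = q • mulOp f g ∧ mulOp f (q • g) = q • mulOp f g)
    ∧ (∀ (a b : ℕ) (f : L a) (g : L b), SymmLaurent (mulOp f g))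
    ∧ (∀ (a b c : ℕ) (f : L a) (g : L b) (h : L c),
        reindexL (Nat.add_assoc a b c) (mulOp (mulOp f g) h) = mulOp f (mulOp g h))
    ∧ (∀ (a b : ℕ) (f : L a) (g : L b), mulOp f g = reindexL (Nat.add_comm b a) (mulOp g f))
    ∧ (∀ (b : ℕ) (g : L b), SymmLaurent g →
        reindexL (Nat.zero_add b) (mulOp (1 : L 0) g) = g ∧ mulOp g (1 : L 0) = g) :=
  ⟨fun _ _ => mulOp_add_left, fun _ _ => mulOp_add_right,
    fun _ _ q f g => ⟨mulOp_smul_left q f g, mulOp_smul_right q f g⟩,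
    fun _ _ => symmLaurent_mulOp, fun _ _ _ => mulOp_assoc, fun _ _ => mulOp_comm,
    fun _ _ hg => ⟨one_mulOp hg, mulOp_one hg⟩⟩

/-- The product `f * g := Y(f,1)g` on `⊕_{n≥0} S_n^±` is ℚ-bilinear,
associative (up to the canonical identification `Fin ((a+b)+c) ≅ Fin (a+(b+c))`),
commutative (up to `Fin (b+a) ≅ Fin (a+b)`), graded with symmetric values
(`f * g ∈ S_{a+b}^±`), and has `1 ∈ S_0^± = ℚ` as a two-sided unit; hence
`⊕_{n≥0} S_n^±` is a commutative graded ℚ-algebra. -/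
theorem stmt_18 :
    (∀ (a b : ℕ) (f f' : L a) (g : L b), SymmLaurent f → SymmLaurent f' → SymmLaurent g →
        mulOp (f + f') g = mulOp f g + mulOp f' g)
    ∧ (∀ (a b : ℕ) (f : L a) (g g' : L b), SymmLaurent f → SymmLaurent g → SymmLaurent g' →
        mulOp f (g + g') = mulOp f g + mulOp f g')
    ∧ (∀ (a b : ℕ) (q : ℚ) (f : L a) (g : L b), SymmLaurent f → SymmLaurent g →
        mulOp (q • f) g = q • mulOp f g ∧ mulOp f (q • g) = q • mulOp f g)
    ∧ (∀ (a b : ℕ) (f : L a) (g : L b), SymmLaurent f → SymmLaurent g →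
        SymmLaurent (mulOp f g))
    ∧ (∀ (a b c : ℕ) (f : L a) (g : L b) (h : L c),
        SymmLaurent f → SymmLaurent g → SymmLaurent h →
        reindexL (Nat.add_assoc a b c) (mulOp (mulOp f g) h) = mulOp f (mulOp g h))
    ∧ (∀ (a b : ℕ) (f : L a) (g : L b), SymmLaurent f → SymmLaurent g →
        mulOp f g = reindexL (Nat.add_comm b a) (mulOp g f))
    ∧ (∀ (b : ℕ) (g : L b), SymmLaurent g →
        reindexL (Nat.zero_add b) (mulOp (1 : L 0) g) = g ∧ mulOp g (1 : L 0) = g) := by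
  obtain ⟨add_left, add_right, smul, symm, assoc, comm, one⟩ := stmt_18_general
  exact ⟨fun a b f f' g _ _ _ => add_left a b f f' g, fun a b f g g' _ _ _ => add_right a b f g g',
    fun a b q f g _ _ => smul a b q f g, fun a b f g _ _ => symm a b f g,
    fun a b c f g h _ _ _ => assoc a b c f g h, fun a b f g _ _ => comm a b f g, one⟩
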